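/- Let A and B be nonempty finite subsets of a positive definite metric space X, with diversifiers w_{A,+} and w_{B,+} regarded as vectors indexed by A∪B by extension with zeros. Then ‖w_{A,+} − w_{B,+}‖_W ≤ 4√2 · |A∪B|_+ · d_H(A,B)^{1/2}, where ‖u‖_W = (Σ_{x,y∈A∪B} e^{-d(x,y)} u_x u_y)^{1/2}, |·|_+ denotes maximum diversity, and d_H is the Hausdorff distance. -/

import Mathlib

/-!
Write `⟨u, v⟩` for the pairing `quadW` and `δ` for the Hausdorff distance of `A` and `B`.

A diversifier `w` of `s` satisfies `⟨w, w⟩ = Σ w = |s|₊`, and maximality of the quotient along the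
rays `w + t e_x` gives the first-order condition `(Z w)_x ≥ 1` for every `x ∈ s`
(`IsDiversifier.one_le_pot`). The potential `Z w` decays at most by the factor `e^{-d(x,y)}`
between two points, and every point of `B` lies within `δ` of `A`, so `Z w_A ≥ e^{-δ}` on `B`.
Integrating against `w_B` gives `⟨w_B, w_A⟩ ≥ e^{-δ} |B|₊`, and by symmetry also
`⟨w_A, w_B⟩ ≥ e^{-δ} |A|₊`. Hence
`‖w_A - w_B‖² = |A|₊ + |B|₊ - 2⟨w_A, w_B⟩ ≤ (1 - e^{-δ}) (|A|₊ + |B|₊) ≤ 2 δ |A ∪ B|₊`,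
and `|A ∪ B|₊ ≥ 1` turns this into a bound stronger than the one claimed.
-/

open scoped BigOperators

/-- A metric space is positive definite if every finite subspace has positive definite
similarity matrix `(e^{-d(x,y)})`. -/
def PosDefSpace (X : Type*) [MetricSpace X] : Prop :=
  ∀ s : Finset X,
    Matrix.PosDef (Matrix.of fun x y : s => Real.exp (-dist (x : X) (y : X)))

/-- The pairing `Σ_{x,y∈s} e^{-d(x,y)} u_x v_y`. -/
noncomputable def quadW {X : Type*} [MetricSpace X] (s : Finset X) (u v : X → ℝ) : ℝ :=
  ∑ x ∈ s, ∑ y ∈ s, Real.exp (-dist x y) * u x * v y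

/-- The quotient `(Σ_{x∈s} w_x)² / (Σ_{x,y∈s} e^{-d(x,y)} w_x w_y)`. -/
noncomputable def ratioW {X : Type*} [MetricSpace X] (s : Finset X) (w : X → ℝ) : ℝ :=
  (∑ x ∈ s, w x) ^ 2 / quadW s w w

/-- The maximum diversity `|s|₊` of a finite subset `s`. -/
noncomputable def finMaxDiv {X : Type*} [MetricSpace X] (s : Finset X) : ℝ :=
  sSup {r : ℝ | ∃ w : X → ℝ,
    (∀ x ∉ s, w x = 0) ∧ w ≠ 0 ∧ (∀ x, 0 ≤ w x) ∧ r = ratioW s w}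

/-- `w` is the diversifier of the finite subset `s` (extended by zero outside `s`). -/
def IsDiversifier {X : Type*} [MetricSpace X] (s : Finset X) (w : X → ℝ) : Prop :=
  (∀ x ∉ s, w x = 0) ∧ w ≠ 0 ∧ (∀ x, 0 ≤ w x) ∧
    (∀ v : X → ℝ, (∀ x ∉ s, v x = 0) → v ≠ 0 → (∀ x, 0 ≤ v x) →
      ratioW s v ≤ ratioW s w) ∧
    ∑ x ∈ s, w x = finMaxDiv s

section Helpers

variable {X : Type*}

lemma sum_mono_set {s t : Finset X} (hst : s ⊆ t) {w : X → ℝ} (hw : ∀ x ∉ s, w x = 0) :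
    ∑ x ∈ t, w x = ∑ x ∈ s, w x :=
  (Finset.sum_subset hst fun y _ hy => hw y hy).symm

lemma sum_pos_of_admissible {s : Finset X} {w : X → ℝ} (hs : ∀ x ∉ s, w x = 0) (h0 : w ≠ 0)
    (hw : ∀ x, 0 ≤ w x) : 0 < ∑ x ∈ s, w x := by
  obtain ⟨x, hx⟩ := Function.ne_iff.mp h0
  have hxs : x ∈ s := by
    by_contra h
    exact hx (hs x h)
  exact Finset.sum_pos' (fun y _ => hw y) ⟨x, hxs, lt_of_le_of_ne (hw x) (Ne.symm hx)⟩

lemma sum_single [DecidableEq X] {s : Finset X} {x : X} (hx : x ∈ s) (t : ℝ) :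
    ∑ y ∈ s, (Pi.single x t : X → ℝ) y = t := by
  rw [Finset.sum_eq_single x]
  · simp
  · intro y _ hy
    simp [hy]
  · exact fun h => absurd hx h

variable [MetricSpace X]

/-- The potential `(Z w)_x = Σ_{y∈s} e^{-d(x,y)} w_y`, defined at every point `x` of the space. -/
noncomputable def pot (s : Finset X) (w : X → ℝ) (x : X) : ℝ :=
  ∑ y ∈ s, Real.exp (-dist x y) * w y

lemma quadW_eq_sum_pot (s : Finset X) (u v : X → ℝ) :
    quadW s u v = ∑ x ∈ s, u x * pot s v x := by
  unfold quadW pot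
  refine Finset.sum_congr rfl fun x _ => ?_
  rw [Finset.mul_sum]
  exact Finset.sum_congr rfl fun y _ => by ring

lemma quadW_comm (s : Finset X) (u v : X → ℝ) : quadW s u v = quadW s v u := by
  unfold quadW
  rw [Finset.sum_comm]
  refine Finset.sum_congr rfl fun x _ => Finset.sum_congr rfl fun y _ => ?_
  rw [dist_comm]; ring

lemma quadW_add_self (s : Finset X) (u v : X → ℝ) :
    quadW s (u + v) (u + v) = quadW s u u + 2 * quadW s v u + quadW s v v := by
  have h : quadW s (u + v) (u + v) =
      quadW s u u + quadW s v u + quadW s u v + quadW s v v := by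
    simp only [quadW, ← Finset.sum_add_distrib, Pi.add_apply]
    exact Finset.sum_congr rfl fun x _ => Finset.sum_congr rfl fun y _ => by ring
  rw [h, quadW_comm s u v]; ring

lemma quadW_sub_self (s : Finset X) (u v : X → ℝ) :
    quadW s (u - v) (u - v) = quadW s u u - 2 * quadW s v u + quadW s v v := by
  have h : quadW s (u - v) (u - v) =
      quadW s u u - quadW s v u - quadW s u v + quadW s v v := by
    simp only [quadW, ← Finset.sum_add_distrib, ← Finset.sum_sub_distrib, Pi.sub_apply]
    exact Finset.sum_congr rfl fun x _ => Finset.sum_congr rfl fun y _ => by ring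
  rw [h, quadW_comm s u v]; ring

lemma pot_mono_set {s t : Finset X} (hst : s ⊆ t) {w : X → ℝ} (hw : ∀ x ∉ s, w x = 0) (x : X) :
    pot t w x = pot s w x :=
  (Finset.sum_subset hst fun y _ hy => by rw [hw y hy, mul_zero]).symm

lemma quadW_eq_of_support {s t r : Finset X} (hst : s ⊆ t) (hrt : r ⊆ t) {u v : X → ℝ}
    (hu : ∀ x ∉ s, u x = 0) (hv : ∀ x ∉ r, v x = 0) :
    quadW t u v = ∑ x ∈ s, u x * pot r v x := by
  rw [quadW_eq_sum_pot]
  simp only [pot_mono_set hrt hv]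
  exact (Finset.sum_subset hst fun y _ hy => by rw [hu y hy, zero_mul]).symm

lemma quadW_mono_set {s t : Finset X} (hst : s ⊆ t) {w : X → ℝ} (hw : ∀ x ∉ s, w x = 0) :
    quadW t w w = quadW s w w := by
  rw [quadW_eq_of_support hst hst hw hw, quadW_eq_sum_pot]

lemma ratioW_mono_set {s t : Finset X} (hst : s ⊆ t) {w : X → ℝ} (hw : ∀ x ∉ s, w x = 0) :
    ratioW t w = ratioW s w := by
  rw [ratioW, ratioW, sum_mono_set hst hw, quadW_mono_set hst hw]

/-- On nonnegative vectors the pairing dominates its diagonal part. -/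
lemma sum_sq_le_quadW (s : Finset X) {w : X → ℝ} (hw : ∀ x, 0 ≤ w x) :
    ∑ x ∈ s, w x ^ 2 ≤ quadW s w w := by
  unfold quadW
  refine Finset.sum_le_sum fun x hx => ?_
  have h := Finset.single_le_sum (f := fun y => Real.exp (-dist x y) * w x * w y)
    (fun y _ => mul_nonneg (mul_nonneg (Real.exp_pos _).le (hw x)) (hw y)) hx
  simp only [dist_self, neg_zero, Real.exp_zero, one_mul] at h
  rwa [pow_two]

lemma sum_sq_le_card_mul_quadW (s : Finset X) {w : X → ℝ} (hw : ∀ x, 0 ≤ w x) :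
    (∑ x ∈ s, w x) ^ 2 ≤ s.card * quadW s w w :=
  sq_sum_le_card_mul_sum_sq.trans
    (mul_le_mul_of_nonneg_left (sum_sq_le_quadW s hw) (Nat.cast_nonneg _))

lemma quadW_pos {s : Finset X} {w : X → ℝ} (hs : ∀ x ∉ s, w x = 0) (h0 : w ≠ 0)
    (hw : ∀ x, 0 ≤ w x) : 0 < quadW s w w := by
  have h1 := sum_pos_of_admissible hs h0 hw
  have h2 := sum_sq_le_card_mul_quadW s hw
  exact pos_of_mul_pos_right (lt_of_lt_of_le (pow_pos h1 2) h2) (Nat.cast_nonneg _)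

/-- The quotients defining `|s|₊` are bounded by the cardinality of `s`, so the supremum is a
genuine one. -/
lemma ratioW_le_finMaxDiv {s : Finset X} {w : X → ℝ} (hs : ∀ x ∉ s, w x = 0) (h0 : w ≠ 0)
    (hw : ∀ x, 0 ≤ w x) : ratioW s w ≤ finMaxDiv s := by
  refine le_csSup ⟨s.card, ?_⟩ ⟨w, hs, h0, hw, rfl⟩
  rintro _ ⟨v, hvs, hv0, hv, rfl⟩
  rw [ratioW, div_le_iff₀ (quadW_pos hvs hv0 hv)]
  exact sum_sq_le_card_mul_quadW s hv

lemma quadW_single [DecidableEq X] {s : Finset X} {x : X} (hx : x ∈ s) (t : ℝ) (v : X → ℝ) :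
    quadW s (Pi.single x t) v = t * pot s v x := by
  rw [quadW_eq_sum_pot, Finset.sum_eq_single x]
  · simp
  · intro y _ hy
    simp [hy]
  · exact fun h => absurd hx h

lemma pot_single [DecidableEq X] {s : Finset X} {x : X} (hx : x ∈ s) (t : ℝ) :
    pot s (Pi.single x t) x = t := by
  rw [pot, Finset.sum_eq_single x]
  · simp
  · intro y _ hy
    simp [hy]
  · exact fun h => absurd hx h

lemma one_le_finMaxDiv {s : Finset X} (hs : s.Nonempty) : 1 ≤ finMaxDiv s := by
  classical
  obtain ⟨x, hx⟩ := hs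
  have h := ratioW_le_finMaxDiv (s := s) (w := Pi.single x 1)
    (fun y hy => by
      have : y ≠ x := fun h => hy (h ▸ hx)
      simp [this])
    (by simp) (fun y => by
      by_cases h : y = x
      · subst h; simp
      · simp [h])
  rwa [ratioW, sum_single hx, quadW_single hx, pot_single hx, one_pow, mul_one, div_one] at h

lemma IsDiversifier.sum_pos {s : Finset X} {w : X → ℝ} (h : IsDiversifier s w) :
    0 < ∑ x ∈ s, w x :=
  sum_pos_of_admissible h.1 h.2.1 h.2.2.1

lemma IsDiversifier.ratioW_eq {s : Finset X} {w : X → ℝ} (h : IsDiversifier s w) :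
    ratioW s w = finMaxDiv s := by
  obtain ⟨hs, h0, hw, hmax, -⟩ := h
  refine le_antisymm (ratioW_le_finMaxDiv hs h0 hw) (csSup_le ⟨_, w, hs, h0, hw, rfl⟩ ?_)
  rintro _ ⟨v, hvs, hv0, hv, rfl⟩
  exact hmax v hvs hv0 hv

lemma IsDiversifier.quadW_self {s : Finset X} {w : X → ℝ} (h : IsDiversifier s w) :
    quadW s w w = ∑ x ∈ s, w x := by
  have hr := h.ratioW_eq
  have hS := h.sum_pos
  have hQ := quadW_pos h.1 h.2.1 h.2.2.1
  rw [← h.2.2.2.2, ratioW, div_eq_iff hQ.ne', pow_two] at hr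
  exact (mul_left_cancel₀ hS.ne' hr).symm

/-- The first-order optimality condition for the diversifier: its potential is at least `1` on the
whole set. -/
lemma IsDiversifier.one_le_pot {s : Finset X} {w : X → ℝ} (h : IsDiversifier s w) {x : X}
    (hx : x ∈ s) : 1 ≤ pot s w x := by
  classical
  by_contra! hlt
  have hS := h.sum_pos
  have hQ := h.quadW_self
  have hr := h.ratioW_eq
  rw [← h.2.2.2.2] at hr
  obtain ⟨hs, h0, hw, hmax, -⟩ := h
  -- With `S = Σ w`, maximality at `w + t e_x` reads `2 S (1 - (Z w)_x) ≤ t (S - 1)`, which fails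
  -- for `t = 1 - (Z w)_x > 0`.
  obtain ⟨t, ht⟩ : ∃ t, t = 1 - pot s w x := ⟨_, rfl⟩
  have htpos : 0 < t := by linarith
  have hsingle : ∀ y, 0 ≤ (Pi.single x t : X → ℝ) y := fun y => by
    by_cases hy : y = x
    · subst hy; simpa using htpos.le
    · simp [hy]
  have hvs : ∀ y ∉ s, (w + Pi.single x t : X → ℝ) y = 0 := fun y hy => by
    have : y ≠ x := fun h => hy (h ▸ hx)
    simp [this, hs y hy]
  have hv0 : w + Pi.single x t ≠ 0 := fun h => by
    have hxx := congrFun h x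
    simp only [Pi.add_apply, Pi.single_eq_same, Pi.zero_apply] at hxx
    linarith [hw x]
  have hv : ∀ y, 0 ≤ (w + Pi.single x t : X → ℝ) y := fun y => add_nonneg (hw y) (hsingle y)
  have hle := hmax _ hvs hv0 hv
  rw [hr, ratioW, div_le_iff₀ (quadW_pos hvs hv0 hv), quadW_add_self, quadW_single hx,
    quadW_single hx, pot_single hx, hQ] at hle
  simp only [Pi.add_apply, Finset.sum_add_distrib, sum_single hx] at hle
  have hp : pot s w x = 1 - t := by linarith
  rw [hp] at hle
  nlinarith [mul_pos hS (mul_pos htpos htpos), mul_pos htpos htpos]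

lemma exp_mul_pot_le {s : Finset X} {w : X → ℝ} (hw : ∀ x, 0 ≤ w x) (x y : X) :
    Real.exp (-dist y x) * pot s w x ≤ pot s w y := by
  unfold pot
  rw [Finset.mul_sum]
  refine Finset.sum_le_sum fun z _ => ?_
  rw [← mul_assoc, ← Real.exp_add]
  refine mul_le_mul_of_nonneg_right (Real.exp_le_exp.mpr ?_) (hw z)
  linarith [dist_triangle y x z]

/-- If every point of `B` is within `δ` of `A`, the potential of the diversifier of `A` is at least
`e^{-δ}` on `B`, which bounds the pairing of the two vectors from below. -/
lemma exp_mul_sum_le_quadW {A B C : Finset X} (hAC : A ⊆ C) (hBC : B ⊆ C) {wA wB : X → ℝ}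
    (hwA : IsDiversifier A wA) (hB0 : ∀ x ∉ B, wB x = 0) (hB : ∀ x, 0 ≤ wB x) {δ : ℝ}
    (hδ : ∀ y ∈ B, ∃ x ∈ A, dist y x ≤ δ) :
    Real.exp (-δ) * ∑ y ∈ B, wB y ≤ quadW C wB wA := by
  rw [quadW_eq_of_support hBC hAC hB0 hwA.1, Finset.mul_sum]
  refine Finset.sum_le_sum fun y hy => ?_
  obtain ⟨x, hx, hxy⟩ := hδ y hy
  rw [mul_comm]
  refine mul_le_mul_of_nonneg_left ?_ (hB y)
  calc Real.exp (-δ) ≤ Real.exp (-dist y x) := Real.exp_le_exp.mpr (neg_le_neg hxy)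
    _ ≤ Real.exp (-dist y x) * pot A wA x :=
        le_mul_of_one_le_right (Real.exp_pos _).le (hwA.one_le_pot hx)
    _ ≤ pot A wA y := exp_mul_pot_le hwA.2.2.1 x y

lemma exists_dist_le_hausdorffDist {A B : Finset X} (hA : A.Nonempty) {y : X} (hy : y ∈ B) :
    ∃ x ∈ A, dist y x ≤ Metric.hausdorffDist (↑B : Set X) (↑A : Set X) := by
  obtain ⟨x, hx, hxy⟩ := A.finite_toSet.isCompact.exists_infDist_eq_dist
    (Finset.coe_nonempty.mpr hA) y
  refine ⟨x, hx, hxy ▸ Metric.infDist_le_hausdorffDist_of_mem (Finset.mem_coe.mpr hy) ?_⟩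
  exact Metric.hausdorffEDist_ne_top_of_nonempty_of_bounded ⟨y, hy⟩ (Finset.coe_nonempty.mpr hA)
    B.finite_toSet.isBounded A.finite_toSet.isBounded

lemma IsDiversifier.sum_le_finMaxDiv {s t : Finset X} (hst : s ⊆ t) {w : X → ℝ}
    (h : IsDiversifier s w) : ∑ x ∈ s, w x ≤ finMaxDiv t := by
  rw [h.2.2.2.2, ← h.ratioW_eq, ← ratioW_mono_set hst h.1]
  exact ratioW_le_finMaxDiv (fun x hx => h.1 x fun hxs => hx (hst hxs)) h.2.1 h.2.2.1

end Helpers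

/-- `‖w_{A,+} − w_{B,+}‖_W ≤ 4√2 · |A∪B|₊ · d_H(A,B)^{1/2}`. -/
theorem stmt15 {X : Type*} [MetricSpace X] [DecidableEq X] (hpd : PosDefSpace X)
    (A B : Finset X) (hA : A.Nonempty) (hB : B.Nonempty)
    (wA wB : X → ℝ) (hwA : IsDiversifier A wA) (hwB : IsDiversifier B wB) :
    Real.sqrt (quadW (A ∪ B) (wA - wB) (wA - wB)) ≤
      4 * Real.sqrt 2 * finMaxDiv (A ∪ B) *
        Real.sqrt (Metric.hausdorffDist (↑A : Set X) (↑B : Set X)) := by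
  have hAC : A ⊆ A ∪ B := Finset.subset_union_left
  have hBC : B ⊆ A ∪ B := Finset.subset_union_right
  have hD1 : 1 ≤ finMaxDiv (A ∪ B) := one_le_finMaxDiv (hA.mono hAC)
  have hSA := hwA.sum_le_finMaxDiv hAC
  have hSB := hwB.sum_le_finMaxDiv hBC
  have hδ0 : 0 ≤ Metric.hausdorffDist (↑A : Set X) (↑B : Set X) := Metric.hausdorffDist_nonneg
  have h1 := exp_mul_sum_le_quadW hAC hBC hwA hwB.1 hwB.2.2.1
    (fun y hy => exists_dist_le_hausdorffDist hA hy)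
  have h2 := exp_mul_sum_le_quadW hBC hAC hwB hwA.1 hwA.2.2.1
    (fun y hy => exists_dist_le_hausdorffDist hB hy)
  rw [Metric.hausdorffDist_comm] at h1
  rw [quadW_comm] at h2
  have hQ := quadW_sub_self (A ∪ B) wA wB
  rw [quadW_mono_set hAC hwA.1, quadW_mono_set hBC hwB.1, hwA.quadW_self, hwB.quadW_self] at hQ
  have hSA0 := hwA.sum_pos
  have hSB0 := hwB.sum_pos
  generalize Metric.hausdorffDist (↑A : Set X) (↑B : Set X) = δ at *
  generalize finMaxDiv (A ∪ B) = D at *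
  have hexp : 1 - δ ≤ Real.exp (-δ) := by linarith [Real.add_one_le_exp (-δ)]
  have hbound : quadW (A ∪ B) (wA - wB) (wA - wB) ≤ 2 * δ * D := by
    have e1 := mul_le_mul_of_nonneg_right hexp hSA0.le
    have e2 := mul_le_mul_of_nonneg_right hexp hSB0.le
    have e3 := mul_le_mul_of_nonneg_left hSA hδ0
    have e4 := mul_le_mul_of_nonneg_left hSB hδ0
    rw [hQ]
    linarith
  refine Real.sqrt_le_iff.mpr ⟨by positivity, hbound.trans ?_⟩
  rw [mul_pow, mul_pow, mul_pow, Real.sq_sqrt hδ0, Real.sq_sqrt (by norm_num)]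
  have hDD : δ * D ≤ δ * D ^ 2 := mul_le_mul_of_nonneg_left (by nlinarith) hδ0
  have : 0 ≤ δ * D ^ 2 := by positivity
  linarith
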